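/- Under the hypotheses of the inductive estimation (Ω bounded open, F continuous, uniformly elliptic with constants 0 < λ ≤ Λ, satisfying the structure condition with constant γ and the joint modulus bound |F(M,P,r,x,t) - F(M,P,r,y,s)| ≤ σ₁(|x-y|) + σ₂(|t-s|), sup_{(x,t)}|F(0,0,0,x,t)| ≤ K, and z_{n,h} the Rothe approximations), one has for every n ≥ 0 the bound ‖z_{n+1,h} - z_{n,h}‖_{L^∞(Ω)} ≤ ‖z_{1,h}‖_{L^∞(Ω)} + n h σ₂(h). Consequently, if in addition σ₂(h) ≤ C₀ h for all h ∈ (0,1], then for every fixed T > 0 there is a constant C, depending only on K, C₀ and T and not on h, such that for n = ⌊T/h⌋ one has ‖z_{n+1,h} - z_{n,h}‖_{L^∞(Ω)} ≤ C h. -/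

import Mathlib

/-!
The increments of the Rothe scheme are controlled by a comparison principle. The functions `z (m + 2)`
and `z (m + 1)` solve the same equation at times differing by `h`, with right-hand sides `z (m + 1) / h`
and `z m / h`, and they agree on the boundary. At a positive maximum of their difference the ellipticity
and the monotonicity of `F` in the value argument leave only the terms `r / h` and the change of `F` in
time, so the difference is at most `‖z (m + 1) - z m‖ + h σ₂(h)` (`comparison`, `rothe_increment_le`).
Induction gives the first claim. Testing with constants gives `‖z 1‖ ≤ K h` (`first_step_le`), and
`⌊T / h⌋ h ≤ T` then yields the second claim with `C = K + T * C₀`.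

As the solutions are only continuous, the comparison needs doubling of variables and a substitute for
the theorem on sums (`doubling`). The sup-convolutions of the two functions are touched at suitable points
by paraboloids from both sides, with slopes that are Lipschitz functions of the contact point
(`Touch.slope_lipschitz`). Linear perturbations of the doubled functional make the sum of the two slopes
cover a ball, hence the contact set has positive measure. At a density point of this set where both slopes
are differentiable along the set (Rademacher), the sup-convolutions have second-order expansions
(`Touch.secondOrder`, `jensen_alexandrov`). These are transferred back to the original functions as
quadratic upper bounds, which serve as test functions (`ViscSubsol.of_quadratic`,
`ViscSupersol.of_quadratic`), and the two Hessians are ordered because the sum has a maximum there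
(`operator_gap`).
-/

open scoped RealInnerProductSpace
open MeasureTheory Filter Topology Asymptotics Metric Set

noncomputable section

abbrev Eucl (d : ℕ) := EuclideanSpace ℝ (Fin d)

open Classical in
noncomputable def eigs {d : ℕ} (M : Matrix (Fin d) (Fin d) ℝ) : Fin d → ℝ :=
  if h : M.IsHermitian then h.eigenvalues else 0

noncomputable def specNorm {d : ℕ} (M : Matrix (Fin d) (Fin d) ℝ) : ℝ := ⨆ i, |eigs M i|
noncomputable def posPartNorm {d : ℕ} (M : Matrix (Fin d) (Fin d) ℝ) : ℝ := ⨆ i, max (eigs M i) 0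
noncomputable def negPartNorm {d : ℕ} (M : Matrix (Fin d) (Fin d) ℝ) : ℝ := ⨆ i, max (-(eigs M i)) 0
noncomputable def posPartTrace {d : ℕ} (M : Matrix (Fin d) (Fin d) ℝ) : ℝ := ∑ i, max (eigs M i) 0
noncomputable def negPartTrace {d : ℕ} (M : Matrix (Fin d) (Fin d) ℝ) : ℝ := ∑ i, max (-(eigs M i)) 0

noncomputable def pucciPlus {d : ℕ} (lam Lam : ℝ) (M : Matrix (Fin d) (Fin d) ℝ) : ℝ :=
  -lam * posPartTrace M + Lam * negPartTrace M

noncomputable def pucciMinus {d : ℕ} (lam Lam : ℝ) (M : Matrix (Fin d) (Fin d) ℝ) : ℝ :=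
  -Lam * posPartTrace M + lam * negPartTrace M

noncomputable def gradAt {d : ℕ} (φ : Eucl d → ℝ) (x : Eucl d) : Eucl d :=
  (EuclideanSpace.equiv (Fin d) ℝ).symm (fun i => fderiv ℝ φ x (EuclideanSpace.single i 1))

noncomputable def hessAt {d : ℕ} (φ : Eucl d → ℝ) (x : Eucl d) : Matrix (Fin d) (Fin d) ℝ :=
  Matrix.of fun i j =>
    fderiv ℝ (fun y => fderiv ℝ φ y (EuclideanSpace.single j 1)) x (EuclideanSpace.single i 1)

noncomputable def quadForm {d : ℕ} (M : Matrix (Fin d) (Fin d) ℝ) (v : Eucl d) : ℝ :=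
  ∑ i, ∑ j, M i j * v i * v j

def ViscSubsol {d : ℕ} (Ω : Set (Eucl d))
    (G : Matrix (Fin d) (Fin d) ℝ → Eucl d → ℝ → Eucl d → ℝ)
    (g : Eucl d → ℝ) (u : Eucl d → ℝ) : Prop :=
  ∀ x₀ ∈ Ω, ∀ φ : Eucl d → ℝ, ContDiffAt ℝ 2 φ x₀ →
    IsLocalMax (fun x => u x - φ x) x₀ →
    G (hessAt φ x₀) (gradAt φ x₀) (u x₀) x₀ ≤ g x₀

def ViscSupersol {d : ℕ} (Ω : Set (Eucl d))
    (G : Matrix (Fin d) (Fin d) ℝ → Eucl d → ℝ → Eucl d → ℝ)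
    (g : Eucl d → ℝ) (u : Eucl d → ℝ) : Prop :=
  ∀ x₀ ∈ Ω, ∀ φ : Eucl d → ℝ, ContDiffAt ℝ 2 φ x₀ →
    IsLocalMin (fun x => u x - φ x) x₀ →
    g x₀ ≤ G (hessAt φ x₀) (gradAt φ x₀) (u x₀) x₀

def ViscSol {d : ℕ} (Ω : Set (Eucl d))
    (G : Matrix (Fin d) (Fin d) ℝ → Eucl d → ℝ → Eucl d → ℝ)
    (g : Eucl d → ℝ) (u : Eucl d → ℝ) : Prop :=
  ViscSubsol Ω G g u ∧ ViscSupersol Ω G g u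

def UniformlyElliptic {d : ℕ} (lam Lam : ℝ) (X : Set (Eucl d)) (Tset : Set ℝ)
    (F : Matrix (Fin d) (Fin d) ℝ → Eucl d → ℝ → Eucl d → ℝ → ℝ) : Prop :=
  ∀ M N : Matrix (Fin d) (Fin d) ℝ, M.IsSymm → N.PosSemidef →
    ∀ (P : Eucl d) (v : ℝ), ∀ x ∈ X, ∀ t ∈ Tset,
      -Lam * specNorm N ≤ F (M + N) P v x t - F M P v x t ∧
      F (M + N) P v x t - F M P v x t ≤ -lam * specNorm N

def IsModulus (σ : ℝ → ℝ) : Prop := Monotone σ ∧ Continuous σ ∧ σ 0 = 0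

def StructureCondition {d : ℕ} (lam Lam gam : ℝ) (ω : ℝ → ℝ → ℝ)
    (X : Set (Eucl d)) (Tset : Set ℝ)
    (F : Matrix (Fin d) (Fin d) ℝ → Eucl d → ℝ → Eucl d → ℝ → ℝ) : Prop :=
  (∀ R > 0, IsModulus (ω R)) ∧
  ∀ R > 0, ∀ M N : Matrix (Fin d) (Fin d) ℝ, M.IsSymm → N.IsSymm →
    ∀ (P Q : Eucl d) (r s : ℝ), |r| ≤ R → |s| ≤ R → ∀ x ∈ X, ∀ t ∈ Tset,
      pucciMinus lam Lam (M - N) - gam * ‖P - Q‖ - ω R (max (s - r) 0)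
          ≤ F M P r x t - F N Q s x t ∧
      F M P r x t - F N Q s x t
          ≤ pucciPlus lam Lam (M - N) + gam * ‖P - Q‖ + ω R (max (r - s) 0)

noncomputable def supConv {d : ℕ} (Ω : Set (Eucl d)) (u : Eucl d → ℝ) (ε : ℝ) (x : Eucl d) : ℝ :=
  sSup ((fun y => u y - ‖x - y‖ ^ 2 / (2 * ε)) '' closure Ω)

noncomputable def infConv {d : ℕ} (Ω : Set (Eucl d)) (u : Eucl d → ℝ) (ε : ℝ) (x : Eucl d) : ℝ :=
  sInf ((fun y => u y + ‖x - y‖ ^ 2 / (2 * ε)) '' closure Ω)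

noncomputable def supNorm {d : ℕ} (Ω : Set (Eucl d)) (u : Eucl d → ℝ) : ℝ :=
  sSup ((fun y => |u y|) '' closure Ω)

def RotheStep {d : ℕ} (Ω : Set (Eucl d))
    (F : Matrix (Fin d) (Fin d) ℝ → Eucl d → ℝ → Eucl d → ℝ → ℝ)
    (h : ℝ) (m : ℕ) (zprev znext : Eucl d → ℝ) : Prop :=
  ContinuousOn znext (closure Ω) ∧
  ViscSol Ω (fun M P r x => F M P r x ((m + 1) * h) + r / h) (fun x => zprev x / h) znext ∧
  ∀ x ∈ frontier Ω, znext x = 0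

noncomputable def rotheInterp {d : ℕ} (z : ℕ → Eucl d → ℝ) (h : ℝ) (x : Eucl d) (t : ℝ) : ℝ :=
  ((⌊t / h⌋₊ + 1 : ℝ) * h - t) / h * z ⌊t / h⌋₊ x + (t - (⌊t / h⌋₊ : ℝ) * h) / h * z (⌊t / h⌋₊ + 1) x

def HasSmoothBoundary {d : ℕ} (Ω : Set (Eucl d)) : Prop :=
  ∃ f : Eucl d → ℝ, ContDiff ℝ (⊤ : ℕ∞) f ∧ Ω = {x | f x < 0} ∧ ∀ x ∈ frontier Ω, fderiv ℝ f x ≠ 0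

def C21 {d : ℕ} (φ : Eucl d → ℝ → ℝ) : Prop :=
  (∀ t, ContDiff ℝ 2 fun x => φ x t) ∧
  (∀ x, ContDiff ℝ 1 fun t => φ x t) ∧
  Continuous (fun p : Eucl d × ℝ => φ p.1 p.2) ∧
  Continuous (fun p : Eucl d × ℝ => hessAt (fun x => φ x p.2) p.1) ∧
  Continuous (fun p : Eucl d × ℝ => gradAt (fun x => φ x p.2) p.1) ∧
  Continuous (fun p : Eucl d × ℝ => deriv (φ p.1) p.2)

def ParabolicViscSubsol {d : ℕ} (Ω : Set (Eucl d)) (T : ℝ)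
    (F : Matrix (Fin d) (Fin d) ℝ → Eucl d → ℝ → Eucl d → ℝ → ℝ)
    (u : Eucl d × ℝ → ℝ) : Prop :=
  ∀ φ : Eucl d → ℝ → ℝ, C21 φ → ∀ ε > (0:ℝ),
    (∀ x ∈ closure Ω, ∀ t ∈ Icc (0:ℝ) T,
      ε ≤ deriv (φ x) t +
        F (hessAt (fun y => φ y t) x) (gradAt (fun y => φ y t) x) (φ x t) x t) →
    ¬ ∃ p ∈ Ω ×ˢ Ioc (0:ℝ) T,
        IsLocalMaxOn (fun q : Eucl d × ℝ => u q - φ q.1 q.2) (Ω ×ˢ Ioc (0:ℝ) T) p ∧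
        u p - φ p.1 p.2 = 0

def ParabolicViscSupersol {d : ℕ} (Ω : Set (Eucl d)) (T : ℝ)
    (F : Matrix (Fin d) (Fin d) ℝ → Eucl d → ℝ → Eucl d → ℝ → ℝ)
    (u : Eucl d × ℝ → ℝ) : Prop :=
  ∀ φ : Eucl d → ℝ → ℝ, C21 φ → ∀ ε > (0:ℝ),
    (∀ x ∈ closure Ω, ∀ t ∈ Icc (0:ℝ) T,
      deriv (φ x) t +
        F (hessAt (fun y => φ y t) x) (gradAt (fun y => φ y t) x) (φ x t) x t ≤ -ε) →
    ¬ ∃ p ∈ Ω ×ˢ Ioc (0:ℝ) T,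
        IsLocalMinOn (fun q : Eucl d × ℝ => u q - φ q.1 q.2) (Ω ×ˢ Ioc (0:ℝ) T) p ∧
        u p - φ p.1 p.2 = 0

/-! ### Second-order expansions on a contact set -/

section Jensen

variable {E : Type*} [NormedAddCommGroup E] [InnerProductSpace ℝ E]

/-- At `ξ` the graph of `f` is enclosed, globally, between the two paraboloids of opening `C`
with common slope `q`. -/
def Touch (f : E → ℝ) (C : ℝ) (ξ q : E) : Prop :=
  ∀ ξ', |f ξ' - f ξ - ⟪q, ξ' - ξ⟫| ≤ C / 2 * ‖ξ' - ξ‖ ^ 2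

/-- The slope is a Lipschitz function of the contact point; in particular it is unique. Both
contact conditions are evaluated at the point reached from `ξ₂` by the displacement
`t • (q₁ - q₂)`; the choice `t = 1 / (3 * C)` lets the quadratic error in `q₁ - q₂` be absorbed. -/
lemma Touch.slope_lipschitz {f : E → ℝ} {C : ℝ} (hC : 0 < C) {ξ₁ ξ₂ q₁ q₂ : E}
    (h₁ : Touch f C ξ₁ q₁) (h₂ : Touch f C ξ₂ q₂) : ‖q₁ - q₂‖ ≤ 3 * C * ‖ξ₁ - ξ₂‖ := by
  set t : ℝ := 1 / (3 * C) with ht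
  have ht0 : 0 < t := by positivity
  have a1 := abs_le.1 (h₂ (ξ₂ + t • (q₁ - q₂)))
  have a2 := abs_le.1 (h₁ (ξ₂ + t • (q₁ - q₂)))
  have a3 := abs_le.1 (h₁ ξ₂)
  have e1 : ξ₂ + t • (q₁ - q₂) - ξ₂ = t • (q₁ - q₂) := by abel
  have e2 : ξ₂ + t • (q₁ - q₂) - ξ₁ = t • (q₁ - q₂) + (ξ₂ - ξ₁) := by abel
  rw [e1] at a1
  rw [e2, inner_add_right] at a2
  have n1 : ‖t • (q₁ - q₂)‖ = t * ‖q₁ - q₂‖ := by rw [norm_smul, Real.norm_of_nonneg ht0.le]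
  have n2 : ‖t • (q₁ - q₂) + (ξ₂ - ξ₁)‖ ^ 2 ≤
      2 * (t * ‖q₁ - q₂‖) ^ 2 + 2 * ‖ξ₁ - ξ₂‖ ^ 2 := by
    have := norm_add_le (t • (q₁ - q₂)) (ξ₂ - ξ₁)
    rw [n1, norm_sub_rev ξ₂ ξ₁] at this
    nlinarith [sq_nonneg (t * ‖q₁ - q₂‖ - ‖ξ₁ - ξ₂‖),
      norm_nonneg (t • (q₁ - q₂) + (ξ₂ - ξ₁))]
  have i1 : ⟪q₁, t • (q₁ - q₂)⟫ - ⟪q₂, t • (q₁ - q₂)⟫ = t * ‖q₁ - q₂‖ ^ 2 := by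
    rw [← inner_sub_left, inner_smul_right, real_inner_self_eq_norm_sq]
  rw [n1] at a1
  rw [norm_sub_rev ξ₂ ξ₁] at a3
  have key : t * ‖q₁ - q₂‖ ^ 2 ≤
      C / 2 * (3 * (t * ‖q₁ - q₂‖) ^ 2 + 3 * ‖ξ₁ - ξ₂‖ ^ 2) := by
    have := mul_le_mul_of_nonneg_left n2 (by positivity : 0 ≤ C / 2)
    linarith [a1.2, a2.1, a3.2]
  have hCt : C * t = 1 / 3 := by rw [ht]; field_simp
  have key2 : ‖q₁ - q₂‖ ^ 2 ≤ (3 * C * ‖ξ₁ - ξ₂‖) ^ 2 := by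
    have h6 := mul_le_mul_of_nonneg_left key (by positivity : 0 ≤ 6 * C)
    have l : 6 * C * (t * ‖q₁ - q₂‖ ^ 2) = 2 * ‖q₁ - q₂‖ ^ 2 := by
      linear_combination 6 * ‖q₁ - q₂‖ ^ 2 * hCt
    have r : 6 * C * (C / 2 * (3 * (t * ‖q₁ - q₂‖) ^ 2 + 3 * ‖ξ₁ - ξ₂‖ ^ 2)) =
        ‖q₁ - q₂‖ ^ 2 + (3 * C * ‖ξ₁ - ξ₂‖) ^ 2 := by
      linear_combination 9 * ‖q₁ - q₂‖ ^ 2 * (C * t + 1 / 3) * hCt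
    linarith
  exact (sq_le_sq₀ (norm_nonneg _) (by positivity)).1 key2

/-- A first-order expansion of the slopes `q` along a set `A` of contact points that is
`‖h‖ / N`-dense near `ξ` integrates to a second-order expansion of `f`. The segment from `ξ` to
`ξ + h` is cut into `N` pieces, and on each piece the increment of `f` is compared with the slope at
a nearby point of `A`. Since `X` enters only through `⟪X h, h⟫`, it need not be symmetric. -/
lemma Touch.chain {f : E → ℝ} {C ε : ℝ} (hC : 0 < C) {A : Set E} {q : E → E}
    (hT : ∀ ζ ∈ A, Touch f C ζ (q ζ)) {ξ : E} {X : E →L[ℝ] E} {N : ℕ} (hN : 0 < N) (h : E)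
    (hA : ∀ a ∈ closedBall (0 : E) 1, ∃ ζ ∈ A, ‖ζ - (ξ + ‖h‖ • a)‖ ≤ ‖h‖ / N)
    (hX : ∀ ζ ∈ A, ‖ζ - ξ‖ ≤ 2 * ‖h‖ → ‖q ζ - q ξ - X (ζ - ξ)‖ ≤ ε * ‖h‖) :
    |f (ξ + h) - f ξ - ⟪q ξ, h⟫ - 1 / 2 * ⟪X h, h⟫| ≤
      (ε + (2 * ‖X‖ + 3 * C) / N) * ‖h‖ ^ 2 := by
  have hN' : (0 : ℝ) < N := by exact_mod_cast hN
  have hN1 : (1 : ℝ) ≤ N := by exact_mod_cast hN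
  -- `D i` is the error of the expansion at the `i`-th node of the segment
  set D : ℕ → ℝ := fun i => f (ξ + ((i : ℝ) / N) • h) - f ξ - ((i : ℝ) / N) * ⟪q ξ, h⟫
    - 1 / 2 * ((i : ℝ) / N) ^ 2 * ⟪X h, h⟫ with hD
  have step : ∀ i : ℕ, i < N →
      |D (i + 1) - D i| ≤ (ε + (2 * ‖X‖ + 3 * C) / N) * ‖h‖ ^ 2 / N := by
    intro i hi
    set s : ℝ := (i : ℝ) / N with hs
    have hs0 : 0 ≤ s := by positivity
    have hs1 : s ≤ 1 := by
      rw [hs, div_le_one hN']; exact_mod_cast hi.le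
    set τ : ℝ := 1 / N with hτ
    have hτ0 : 0 < τ := by positivity
    have hτ1 : τ ≤ 1 := by rw [hτ, div_le_one hN']; exact hN1
    have hs' : ((i + 1 : ℕ) : ℝ) / N = s + τ := by rw [hs, hτ]; push_cast; ring
    obtain ⟨ζ, hζA, hζ⟩ : ∃ ζ ∈ A, ‖ζ - (ξ + s • h)‖ ≤ τ * ‖h‖ := by
      obtain ⟨ζ, hζA, hζ⟩ := hA ((s * ‖h‖⁻¹) • h) (by
        rw [mem_closedBall_zero_iff, norm_smul, norm_mul, norm_inv, norm_norm,
          Real.norm_of_nonneg hs0, mul_assoc]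
        exact mul_le_one₀ hs1 (by positivity) inv_mul_le_one)
      refine ⟨ζ, hζA, ?_⟩
      have : ‖h‖ • ((s * ‖h‖⁻¹) • h) = s • h := by
        rcases eq_or_ne h 0 with rfl | h0
        · simp
        · have := norm_ne_zero_iff.2 h0
          rw [smul_smul]; congr 1; field_simp
      rw [this] at hζ
      rw [hτ]; convert hζ using 1; ring
    set e : E := ζ - (ξ + s • h) with he
    have hζe : ζ - ξ = s • h + e := by rw [he]; abel
    have hx := hX ζ hζA (by
      rw [hζe]
      refine (norm_add_le _ _).trans ?_
      rw [norm_smul, Real.norm_of_nonneg hs0]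
      nlinarith [norm_nonneg h])
    set w : E := q ζ - q ξ - X (ζ - ξ) with hw
    have hqζ : q ζ = q ξ + s • X h + X e + w := by
      rw [hw, hζe, map_add, map_smul]; abel
    have t1 := hT ζ hζA (ξ + (s + τ) • h)
    have t2 := hT ζ hζA (ξ + s • h)
    have d1 : ξ + (s + τ) • h - ζ = τ • h - e := by rw [he, add_smul]; abel
    have d2 : ξ + s • h - ζ = -e := by rw [he]; abel
    rw [d1] at t1
    rw [d2, norm_neg] at t2
    have n1 : ‖τ • h - e‖ ^ 2 ≤ 4 * (τ * ‖h‖) ^ 2 := by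
      have := norm_sub_le (τ • h) e
      rw [norm_smul, Real.norm_of_nonneg hτ0.le] at this
      have h2 : ‖τ • h - e‖ ≤ 2 * (τ * ‖h‖) := by linarith
      calc _ ≤ (2 * (τ * ‖h‖)) ^ 2 := by gcongr
        _ = _ := by ring
    have n2 : ‖e‖ ^ 2 ≤ (τ * ‖h‖) ^ 2 := by gcongr
    have c1 : |⟪X e, h⟫| ≤ ‖X‖ * (τ * ‖h‖) * ‖h‖ :=
      (abs_real_inner_le_norm _ _).trans (by
        gcongr; exact (X.le_opNorm e).trans (by gcongr))
    have c2 : |⟪w, h⟫| ≤ ε * ‖h‖ * ‖h‖ :=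
      (abs_real_inner_le_norm _ _).trans (by gcongr)
    have c3 : |⟪X h, h⟫| ≤ ‖X‖ * ‖h‖ * ‖h‖ :=
      (abs_real_inner_le_norm _ _).trans (by gcongr; exact X.le_opNorm h)
    have eq1 : ⟪q ζ, τ • h - e⟫ - ⟪q ζ, -e⟫ =
        τ * (⟪q ξ, h⟫ + s * ⟪X h, h⟫ + ⟪X e, h⟫ + ⟪w, h⟫) := by
      rw [← inner_sub_right]
      have : τ • h - e - -e = τ • h := by abel
      rw [this, inner_smul_right, hqζ, inner_add_left, inner_add_left, inner_add_left,
        real_inner_smul_left]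
    have eqD : D (i + 1) - D i =
        (f (ξ + (s + τ) • h) - f ζ - ⟪q ζ, τ • h - e⟫) - (f (ξ + s • h) - f ζ - ⟪q ζ, -e⟫)
        + τ * ⟪X e, h⟫ + τ * ⟪w, h⟫ - 1 / 2 * τ ^ 2 * ⟪X h, h⟫ := by
      simp only [hD, hs']
      rw [← hs]
      linear_combination eq1
    have b1 : |τ * ⟪X e, h⟫| ≤ τ * (‖X‖ * (τ * ‖h‖) * ‖h‖) := by
      rw [abs_mul, abs_of_pos hτ0]; gcongr
    have b2 : |τ * ⟪w, h⟫| ≤ τ * (ε * ‖h‖ * ‖h‖) := by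
      rw [abs_mul, abs_of_pos hτ0]; gcongr
    have b3 : |1 / 2 * τ ^ 2 * ⟪X h, h⟫| ≤ 1 / 2 * τ ^ 2 * (‖X‖ * ‖h‖ * ‖h‖) := by
      rw [abs_mul, abs_of_pos (by positivity : 0 < 1 / 2 * τ ^ 2)]; gcongr
    have t1' := t1.trans (mul_le_mul_of_nonneg_left n1 (by positivity : 0 ≤ C / 2))
    have t2' := t2.trans (mul_le_mul_of_nonneg_left n2 (by positivity : 0 ≤ C / 2))
    have rhs : (ε + (2 * ‖X‖ + 3 * C) / N) * ‖h‖ ^ 2 / N =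
        τ * (ε * ‖h‖ * ‖h‖) + τ ^ 2 * (2 * ‖X‖ + 3 * C) * ‖h‖ ^ 2 := by
      rw [hτ]; field_simp
    rw [rhs, eqD]
    have p1 : 0 ≤ ‖X‖ * (τ ^ 2 * ‖h‖ ^ 2) := by positivity
    have p2 : 0 ≤ C * (τ ^ 2 * ‖h‖ ^ 2) := by positivity
    rw [abs_le] at *
    constructor <;> linarith [b1.1, b1.2, b2.1, b2.2, b3.1, b3.2, t1'.1, t1'.2, t2'.1, t2'.2]
  have tot : ∀ i : ℕ, i ≤ N → |D i| ≤ i * ((ε + (2 * ‖X‖ + 3 * C) / N) * ‖h‖ ^ 2 / N) := by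
    intro i
    induction i with
    | zero => intro _; simp [hD]
    | succ i ih =>
      intro hi
      have := abs_add_le (D (i + 1) - D i) (D i)
      rw [sub_add_cancel] at this
      have h1 := step i hi
      have h2 := ih (by omega)
      push_cast
      linarith
  have := tot N le_rfl
  have hNN : (N : ℝ) / N = 1 := div_self hN'.ne'
  simp only [hD, hNN, one_smul, one_mul, one_pow, mul_one] at this
  refine this.trans (le_of_eq ?_)
  field_simp

variable [FiniteDimensional ℝ E] [MeasurableSpace E] [BorelSpace E]

open scoped Pointwise in
/-- Near a density point `ξ` of `A`, every point of a small ball of radius `r` around `ξ` is within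
`r * η` of `A`. -/
lemma density_net (μ : Measure E) [μ.IsAddHaarMeasure] {A : Set E} {ξ : E}
    (hd : Tendsto (fun r => μ (A ∩ closedBall ξ r) / μ (closedBall ξ r)) (𝓝[>] 0) (𝓝 1))
    {η : ℝ} (hη : 0 < η) :
    ∀ᶠ r : ℝ in 𝓝[>] 0, ∀ a ∈ closedBall (0 : E) 1, ∃ ζ ∈ A, ‖ζ - (ξ + r • a)‖ ≤ r * η := by
  obtain ⟨t, -, htf, ht⟩ := (isCompact_closedBall (0 : E) 1).finite_cover_balls (half_pos hη)
  have h1 : ∀ᶠ r : ℝ in 𝓝[>] 0, ∀ b ∈ t, (A ∩ ({ξ} + r • ball b (η / 2))).Nonempty := by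
    rw [Filter.eventually_all_finite htf]
    intro b _
    exact Measure.eventually_nonempty_inter_smul_of_density_one μ A ξ hd _ measurableSet_ball
      (measure_ball_pos μ b (half_pos hη)).ne'
  filter_upwards [h1, self_mem_nhdsWithin] with r hr hr0 a ha
  have hr0 : 0 < r := hr0
  obtain ⟨b, hb, hab⟩ := mem_iUnion₂.1 (ht ha)
  obtain ⟨ζ, hζA, hζ⟩ := hr b hb
  refine ⟨ζ, hζA, ?_⟩
  rw [singleton_add, mem_image] at hζ
  obtain ⟨y, ⟨c, hc, rfl⟩, rfl⟩ := hζ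
  have : ξ + r • c - (ξ + r • a) = r • (c - a) := by rw [smul_sub]; abel
  simp only [this]
  rw [norm_smul, Real.norm_of_nonneg hr0.le]
  gcongr
  rw [← dist_eq_norm]
  have := dist_triangle_right c a b
  rw [mem_ball] at hc hab
  linarith

/-- `f` has at `ξ` the second-order Taylor expansion with gradient `q` and quadratic part
`⟪X h, h⟫ / 2`; `X` is not required to be symmetric. -/
def SecondOrder (f : E → ℝ) (ξ q : E) (X : E →L[ℝ] E) : Prop :=
  ∀ κ > 0, ∀ᶠ h in 𝓝 (0 : E),
    |f (ξ + h) - f ξ - ⟪q, h⟫ - 1 / 2 * ⟪X h, h⟫| ≤ κ * ‖h‖ ^ 2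

/-- A function has a second-order expansion at every density point of its contact set at which the
slope is differentiable along that set. -/
lemma Touch.secondOrder (μ : Measure E) [μ.IsAddHaarMeasure] {f : E → ℝ} {C : ℝ} (hC : 0 < C)
    {A : Set E} {q : E → E} (hT : ∀ ζ ∈ A, Touch f C ζ (q ζ)) {ξ : E} {X : E →L[ℝ] E}
    (hX : HasFDerivWithinAt q X A ξ)
    (hd : Tendsto (fun r => μ (A ∩ closedBall ξ r) / μ (closedBall ξ r)) (𝓝[>] 0) (𝓝 1)) :
    SecondOrder f ξ (q ξ) X := by
  intro κ hκ
  obtain ⟨N, hN⟩ := exists_nat_gt (2 * (2 * ‖X‖ + 3 * C) / κ)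
  have hN' : (0 : ℝ) < N := lt_of_le_of_lt (by positivity) hN
  have e1 : ∀ᶠ r : ℝ in 𝓝[>] 0, ∀ ζ ∈ A, ‖ζ - ξ‖ ≤ 2 * r →
      ‖q ζ - q ξ - X (ζ - ξ)‖ ≤ (κ / 2) * r := by
    have := hX.isLittleO.def (by positivity : 0 < κ / 4)
    rw [eventually_nhdsWithin_iff, Metric.eventually_nhds_iff] at this
    obtain ⟨ε, hε, H⟩ := this
    filter_upwards [Ioo_mem_nhdsGT (by positivity : 0 < ε / 2)] with r hr ζ hζ hζr
    have := H (y := ζ) (by rw [dist_eq_norm]; linarith [hr.2]) hζ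
    refine this.trans ?_
    calc κ / 4 * ‖ζ - ξ‖ ≤ κ / 4 * (2 * r) := by gcongr
      _ = _ := by ring
  have e2 := density_net μ hd (η := 1 / (N : ℝ)) (by positivity)
  have e3 := tendsto_norm_nhdsNE_zero (E := E) |>.eventually (e1.and e2)
  rw [eventually_nhdsWithin_iff] at e3
  filter_upwards [e3] with h hh
  rcases eq_or_ne h 0 with rfl | h0
  · simp
  obtain ⟨ha, hb⟩ := hh h0
  refine (Touch.chain hC hT (by exact_mod_cast hN') h (fun a h1 => ?_) ha).trans ?_
  · obtain ⟨ζ, h2, h3⟩ := hb a h1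
    exact ⟨ζ, h2, h3.trans (le_of_eq (by ring))⟩
  · gcongr
    have : (2 * ‖X‖ + 3 * C) / N ≤ κ / 2 := by
      rw [div_lt_iff₀ hκ] at hN
      rw [div_le_iff₀ hN']; linarith
    linarith

/-- A combination of Jensen's lemma and Alexandrov's theorem. If every small vector `p` is the sum
of slopes of `f` and `g` at a common contact point, then there is a contact point with small total
slope at which both `f` and `g` have second-order expansions. The relation `R` carries further
information about the contact point and its two slopes.

The map sending a contact point to its total slope is Lipschitz and covers a ball, so the contact set
is not null; by Rademacher's theorem and the Lebesgue density theorem almost all of its points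
qualify. -/
lemma jensen_alexandrov {f g : E → ℝ} {C ρ : ℝ} (hC : 0 < C) (hρ : 0 < ρ) (R : E → E → E → Prop)
    (hR : ∀ p, ‖p‖ < ρ → ∃ ξ q q', q + q' = p ∧ Touch f C ξ q ∧ Touch g C ξ q' ∧ R ξ q q') :
    ∃ ξ q q' X Y, ‖q + q'‖ < ρ ∧ R ξ q q' ∧ SecondOrder f ξ q X ∧ SecondOrder g ξ q' Y := by
  set μ : Measure E := Measure.hausdorffMeasure (Module.finrank ℝ E) with hμ
  set A : Set E := {ξ | ∃ q q', ‖q + q'‖ < ρ ∧ Touch f C ξ q ∧ Touch g C ξ q' ∧ R ξ q q'} with hA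
  have hex : ∀ ξ, ∃ Q : E × E, ξ ∈ A → ‖Q.1 + Q.2‖ < ρ ∧ Touch f C ξ Q.1 ∧ Touch g C ξ Q.2 ∧
      R ξ Q.1 Q.2 := by
    intro ξ
    by_cases h : ξ ∈ A
    · obtain ⟨q, q', H⟩ := h
      exact ⟨(q, q'), fun _ => H⟩
    · exact ⟨0, fun h' => absurd h' h⟩
  choose Q hQ using hex
  have lip1 : LipschitzOnWith (3 * C).toNNReal (fun ξ => (Q ξ).1) A := by
    refine LipschitzOnWith.of_dist_le_mul fun x hx y hy => ?_
    rw [dist_eq_norm, dist_eq_norm, Real.coe_toNNReal _ (by positivity)]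
    exact (hQ x hx).2.1.slope_lipschitz hC (hQ y hy).2.1
  have lip2 : LipschitzOnWith (3 * C).toNNReal (fun ξ => (Q ξ).2) A := by
    refine LipschitzOnWith.of_dist_le_mul fun x hx y hy => ?_
    rw [dist_eq_norm, dist_eq_norm, Real.coe_toNNReal _ (by positivity)]
    exact (hQ x hx).2.2.1.slope_lipschitz hC (hQ y hy).2.2.1
  have hcover : ball (0 : E) ρ ⊆ (fun ξ => (Q ξ).1 + (Q ξ).2) '' A := by
    intro p hp
    rw [mem_ball_zero_iff] at hp
    obtain ⟨ξ, q, q', rfl, h1, h2, h3⟩ := hR p hp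
    have hξ : ξ ∈ A := ⟨q, q', hp, h1, h2, h3⟩
    refine ⟨ξ, hξ, ?_⟩
    have k1 := (hQ ξ hξ).2.1.slope_lipschitz hC h1
    have k2 := (hQ ξ hξ).2.2.1.slope_lipschitz hC h2
    rw [sub_self, norm_zero, mul_zero] at k1 k2
    have k1 := sub_eq_zero.1 (norm_le_zero_iff.1 k1)
    have k2 := sub_eq_zero.1 (norm_le_zero_iff.1 k2)
    simp only [k1, k2]
  have hpos : μ A ≠ 0 := by
    intro h0
    have h1 := (lip1.add lip2).hausdorffMeasure_image_le (d := Module.finrank ℝ E) (by positivity)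
    rw [← hμ, h0, mul_zero] at h1
    have h2 := (measure_mono hcover).trans h1
    exact absurd h2 (not_le.2 (measure_ball_pos μ 0 hρ))
  have d1 : ∀ᵐ ξ ∂μ, ξ ∈ A → DifferentiableWithinAt ℝ (fun ξ => (Q ξ).1) A ξ :=
    lip1.ae_differentiableWithinAt_of_mem
  have d2 : ∀ᵐ ξ ∂μ, ξ ∈ A → DifferentiableWithinAt ℝ (fun ξ => (Q ξ).2) A ξ :=
    lip2.ae_differentiableWithinAt_of_mem
  have d3 := ae_imp_of_ae_restrict (Besicovitch.ae_tendsto_measure_inter_div μ A)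
  obtain ⟨ξ, hξA, hξ⟩ : ∃ ξ ∈ A, DifferentiableWithinAt ℝ (fun ξ => (Q ξ).1) A ξ ∧
      DifferentiableWithinAt ℝ (fun ξ => (Q ξ).2) A ξ ∧
      Tendsto (fun r => μ (A ∩ closedBall ξ r) / μ (closedBall ξ r)) (𝓝[>] 0) (𝓝 1) := by
    by_contra! hcon
    apply hpos
    rw [← nonpos_iff_eq_zero]
    have : ∀ᵐ ξ ∂μ, ξ ∉ A := by
      filter_upwards [d1, d2, d3] with ξ a1 a2 a3 hξ
      exact hcon ξ hξ (a1 hξ) (a2 hξ) (a3 hξ)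
    have h := ae_iff.1 this
    simp only [not_not, ofPred_mem_eq] at h
    exact h.le
  obtain ⟨hX, hY, hd⟩ := hξ
  exact ⟨ξ, (Q ξ).1, (Q ξ).2, _, _, (hQ ξ hξA).1, (hQ ξ hξA).2.2.2,
    Touch.secondOrder μ hC (fun ζ hζ => (hQ ζ hζ).2.1) hX.hasFDerivWithinAt hd,
    Touch.secondOrder μ hC (fun ζ hζ => (hQ ζ hζ).2.2.1) hY.hasFDerivWithinAt hd⟩

end Jensen

/-! ### Doubling of variables -/

section Doubling

variable {E : Type*} [NormedAddCommGroup E] [InnerProductSpace ℝ E]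

/-- Completing the square in `ξ`: the minimum of the left side over `ξ` is the doubling penalty
`‖x - y‖ ^ 2 / (4 * δ)` plus a linear function of `x + y` and a constant. -/
lemma doubling_identity {δ : ℝ} (hδ : 0 < δ) (p x y ξ : E) :
    ‖x - ξ‖ ^ 2 / (2 * δ) + ‖y - ξ‖ ^ 2 / (2 * δ) + ⟪p, ξ⟫ =
      ‖x - y‖ ^ 2 / (4 * δ) + ⟪p, x + y⟫ / 2 - δ / 4 * ‖p‖ ^ 2 +
        ‖(1 / 2 : ℝ) • (x + y) - (δ / 2) • p - ξ‖ ^ 2 / δ := by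
  simp only [← real_inner_self_eq_norm_sq, inner_sub_left, inner_sub_right, inner_add_left,
    inner_add_right, real_inner_smul_left, real_inner_smul_right]
  rw [real_inner_comm x ξ, real_inner_comm y ξ, real_inner_comm x y, real_inner_comm p x,
    real_inner_comm p y, real_inner_comm p ξ]
  field_simp
  ring

variable [FiniteDimensional ℝ E] [MeasurableSpace E] [BorelSpace E]

/-- Doubling of variables: a linear perturbation, with `‖q + q'‖ < ρ`, of
`u x + w y - ‖x - y‖ ^ 2 / (4 * δ)` attains its maximum over `K × K` at a point where `u` and `w` are
touched from above, up to `κ * ‖h‖ ^ 2`, by quadratic polynomials whose second-order parts satisfy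
`X + Y ≤ 0`. This replaces the theorem on sums of Crandall and Ishii.

`jensen_alexandrov` is applied to the sup-convolutions `U` and `W` of `u` and `w`. Their sum with a
linear function has a global maximum at a point `ξ` given explicitly by the maximizing pair, and the
expansions of `U`, `W` at `ξ` bound `u`, `w` from above at the points `ξ + δ • q`, `ξ + δ • q'`
where the sup-convolutions are attained. -/
lemma doubling {K : Set E} (hK : IsCompact K) (hne : K.Nonempty) {u w : E → ℝ}
    (hu : ContinuousOn u K) (hw : ContinuousOn w K) {δ ρ : ℝ} (hδ : 0 < δ) (hρ : 0 < ρ) :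
    ∃ (x y q q' : E) (X Y : E →L[ℝ] E), x ∈ K ∧ y ∈ K ∧ ‖q + q'‖ < ρ ∧
      (∀ x' ∈ K, ∀ y' ∈ K,
        u x' + w y' - ‖x' - y'‖ ^ 2 / (4 * δ) - ⟪q + q', x' + y'⟫ / 2 ≤
          u x + w y - ‖x - y‖ ^ 2 / (4 * δ) - ⟪q + q', x + y⟫ / 2) ∧
      (∀ h, ⟪X h, h⟫ + ⟪Y h, h⟫ ≤ 0) ∧
      (∀ κ > 0, ∀ᶠ h in 𝓝 (0 : E), x + h ∈ K →
        u (x + h) ≤ u x + ⟪q, h⟫ + 1 / 2 * ⟪X h, h⟫ + κ * ‖h‖ ^ 2) ∧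
      (∀ κ > 0, ∀ᶠ h in 𝓝 (0 : E), y + h ∈ K →
        w (y + h) ≤ w y + ⟪q', h⟫ + 1 / 2 * ⟪Y h, h⟫ + κ * ‖h‖ ^ 2) := by
  -- existence of the sup-convolution on all of `E`, with the supremum attained in `K`
  have att : ∀ {f : E → ℝ}, ContinuousOn f K → ∃ G : E → ℝ,
      (∀ ξ, ∃ x ∈ K, G ξ = f x - ‖x - ξ‖ ^ 2 / (2 * δ)) ∧
      ∀ ξ, ∀ x ∈ K, f x - ‖x - ξ‖ ^ 2 / (2 * δ) ≤ G ξ := by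
    intro f hf
    have : ∀ ξ : E, ∃ x ∈ K, ∀ x' ∈ K,
        f x' - ‖x' - ξ‖ ^ 2 / (2 * δ) ≤ f x - ‖x - ξ‖ ^ 2 / (2 * δ) := by
      intro ξ
      have hc : ContinuousOn (fun x => f x - ‖x - ξ‖ ^ 2 / (2 * δ)) K :=
        hf.sub (by fun_prop)
      obtain ⟨x, hx, hmax⟩ := hK.exists_isMaxOn hne hc
      exact ⟨x, hx, fun x' hx' => hmax hx'⟩
    choose G hG hG' using this
    exact ⟨fun ξ => f (G ξ) - ‖G ξ - ξ‖ ^ 2 / (2 * δ), fun ξ => ⟨G ξ, hG ξ, rfl⟩, hG'⟩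
  obtain ⟨U, hU1, hU2⟩ := att hu
  obtain ⟨W, hW1, hW2⟩ := att hw
  -- at every point the sup-convolution is touched from below by a paraboloid of opening `1 / δ`
  have low : ∀ (f G : E → ℝ), (∀ ξ, ∀ x ∈ K, f x - ‖x - ξ‖ ^ 2 / (2 * δ) ≤ G ξ) →
      ∀ ξ q, ξ + δ • q ∈ K → G ξ = f (ξ + δ • q) - δ / 2 * ‖q‖ ^ 2 → ∀ ξ',
      G ξ + ⟪q, ξ' - ξ⟫ - (1 / δ) / 2 * ‖ξ' - ξ‖ ^ 2 ≤ G ξ' := by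
    intro f G hG ξ q hq hGξ ξ'
    refine le_trans (le_of_eq ?_) (hG ξ' _ hq)
    have : ξ + δ • q - ξ' = δ • q - (ξ' - ξ) := by abel
    rw [hGξ, this, norm_sub_sq_real (δ • q), norm_smul, real_inner_smul_left, Real.norm_of_nonneg hδ.le]
    field_simp
    ring
  obtain ⟨ξ, q, q', X, Y, hp, ⟨hx, hy, hmax, hUx, hWy, htop⟩, hX, hY⟩ :=
    jensen_alexandrov (f := U) (g := W) (C := 1 / δ) (ρ := ρ) (by positivity) hρ
      (fun ξ q q' => ξ + δ • q ∈ K ∧ ξ + δ • q' ∈ K ∧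
        (∀ x' ∈ K, ∀ y' ∈ K,
          u x' + w y' - ‖x' - y'‖ ^ 2 / (4 * δ) - ⟪q + q', x' + y'⟫ / 2 ≤
          u (ξ + δ • q) + w (ξ + δ • q') - ‖(ξ + δ • q) - (ξ + δ • q')‖ ^ 2 / (4 * δ)
            - ⟪q + q', (ξ + δ • q) + (ξ + δ • q')⟫ / 2) ∧
        U ξ = u (ξ + δ • q) - δ / 2 * ‖q‖ ^ 2 ∧ W ξ = w (ξ + δ • q') - δ / 2 * ‖q'‖ ^ 2 ∧
        ∀ ξ', U ξ' + W ξ' ≤ U ξ + W ξ + ⟪q + q', ξ' - ξ⟫) (by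
      intro p _
      have hc : ContinuousOn (fun z : E × E => u z.1 + w z.2 - ‖z.1 - z.2‖ ^ 2 / (4 * δ)
          - ⟪p, z.1 + z.2⟫ / 2) (K ×ˢ K) := by
        refine ContinuousOn.sub (ContinuousOn.sub (ContinuousOn.add ?_ ?_) ?_) ?_
        · exact hu.comp continuousOn_fst (fun z hz => hz.1)
        · exact hw.comp continuousOn_snd (fun z hz => hz.2)
        · fun_prop
        · fun_prop
      obtain ⟨⟨x, y⟩, ⟨hx, hy⟩, hmax⟩ := (hK.prod hK).exists_isMaxOn (hne.prod hne) hc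
      have hmax : ∀ x' ∈ K, ∀ y' ∈ K,
          u x' + w y' - ‖x' - y'‖ ^ 2 / (4 * δ) - ⟪p, x' + y'⟫ / 2 ≤
          u x + w y - ‖x - y‖ ^ 2 / (4 * δ) - ⟪p, x + y⟫ / 2 :=
        fun x' hx' y' hy' => hmax (show (x', y') ∈ K ×ˢ K from ⟨hx', hy'⟩)
      set ξ : E := (1 / 2 : ℝ) • (x + y) - (δ / 2) • p with hξ
      have hxq : ξ + δ • ((1 / δ) • (x - ξ)) = x := by
        rw [smul_smul, mul_one_div_cancel hδ.ne', one_smul]; abel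
      have hyq : ξ + δ • ((1 / δ) • (y - ξ)) = y := by
        rw [smul_smul, mul_one_div_cancel hδ.ne', one_smul]; abel
      have hpq : (1 / δ) • (x - ξ) + (1 / δ) • (y - ξ) = p := by
        rw [← smul_add]
        have : x - ξ + (y - ξ) = δ • p := by rw [hξ]; module
        rw [this, smul_smul, one_div_mul_cancel hδ.ne', one_smul]
      have hnx : ‖x - ξ‖ ^ 2 / (2 * δ) = δ / 2 * ‖(1 / δ) • (x - ξ)‖ ^ 2 := by
        rw [norm_smul, Real.norm_of_nonneg (by positivity)]; field_simp
      have hny : ‖y - ξ‖ ^ 2 / (2 * δ) = δ / 2 * ‖(1 / δ) • (y - ξ)‖ ^ 2 := by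
        rw [norm_smul, Real.norm_of_nonneg (by positivity)]; field_simp
      -- the triple (ξ, x, y) is a global maximum
      have triple : ∀ ξ', ∀ x' ∈ K, ∀ y' ∈ K,
          (u x' - ‖x' - ξ'‖ ^ 2 / (2 * δ)) + (w y' - ‖y' - ξ'‖ ^ 2 / (2 * δ)) - ⟪p, ξ'⟫ ≤
          (u x - ‖x - ξ‖ ^ 2 / (2 * δ)) + (w y - ‖y - ξ‖ ^ 2 / (2 * δ)) - ⟪p, ξ⟫ := by
        intro ξ' x' hx' y' hy'
        have i1 := doubling_identity hδ p x' y' ξ'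
        have i2 := doubling_identity hδ p x y ξ
        rw [← hξ, sub_self, norm_zero] at i2
        have : 0 ≤ ‖(1 / 2 : ℝ) • (x' + y') - (δ / 2) • p - ξ'‖ ^ 2 / δ := by positivity
        have := hmax x' hx' y' hy'
        simp only [ne_eq, OfNat.ofNat_ne_zero, not_false_eq_true, zero_pow, zero_div] at i2
        linarith
      have hUξ : U ξ = u x - ‖x - ξ‖ ^ 2 / (2 * δ) := by
        obtain ⟨x', hx', e⟩ := hU1 ξ
        refine le_antisymm ?_ (hU2 ξ x hx)
        have := triple ξ x' hx' y hy
        rw [e]; linarith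
      have hWξ : W ξ = w y - ‖y - ξ‖ ^ 2 / (2 * δ) := by
        obtain ⟨y', hy', e⟩ := hW1 ξ
        refine le_antisymm ?_ (hW2 ξ y hy)
        have := triple ξ x hx y' hy'
        rw [e]; linarith
      have htop : ∀ ξ', U ξ' + W ξ' ≤ U ξ + W ξ + ⟪p, ξ' - ξ⟫ := by
        intro ξ'
        obtain ⟨x', hx', e⟩ := hU1 ξ'
        obtain ⟨y', hy', e'⟩ := hW1 ξ'
        have := triple ξ' x' hx' y' hy'
        rw [e, e', hUξ, hWξ, inner_sub_right]
        linarith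
      have hUq : U ξ = u (ξ + δ • ((1 / δ) • (x - ξ))) - δ / 2 * ‖(1 / δ) • (x - ξ)‖ ^ 2 := by
        rw [hxq, hUξ, hnx]
      have hWq : W ξ = w (ξ + δ • ((1 / δ) • (y - ξ))) - δ / 2 * ‖(1 / δ) • (y - ξ)‖ ^ 2 := by
        rw [hyq, hWξ, hny]
      have lowU := low u U hU2 ξ _ (by rw [hxq]; exact hx) hUq
      have lowW := low w W hW2 ξ _ (by rw [hyq]; exact hy) hWq
      refine ⟨ξ, (1 / δ) • (x - ξ), (1 / δ) • (y - ξ), hpq, ?_, ?_, ?_, ?_, ?_, hUq, hWq, ?_⟩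
      · intro ξ'
        have a1 := lowU ξ'
        have a2 := lowW ξ'
        have a3 := htop ξ'
        rw [← hpq, inner_add_left] at a3
        rw [abs_le]; constructor <;> linarith
      · intro ξ'
        have a1 := lowU ξ'
        have a2 := lowW ξ'
        have a3 := htop ξ'
        rw [← hpq, inner_add_left] at a3
        rw [abs_le]; constructor <;> linarith
      · rw [hxq]; exact hx
      · rw [hyq]; exact hy
      · rw [hxq, hyq, hpq]; exact hmax
      · rw [hpq]; exact htop)
  -- an expansion of the sup-convolution at `ξ` is an upper bound for the function itself at
  -- the shifted point, since the shift of both arguments leaves their distance unchanged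
  have tr : ∀ (f G : E → ℝ) (q : E) (X : E →L[ℝ] E),
      (∀ ξ, ∀ x ∈ K, f x - ‖x - ξ‖ ^ 2 / (2 * δ) ≤ G ξ) →
      G ξ = f (ξ + δ • q) - δ / 2 * ‖q‖ ^ 2 → SecondOrder G ξ q X →
      ∀ κ > 0, ∀ᶠ h in 𝓝 (0 : E), ξ + δ • q + h ∈ K →
        f (ξ + δ • q + h) ≤ f (ξ + δ • q) + ⟪q, h⟫ + 1 / 2 * ⟪X h, h⟫ + κ * ‖h‖ ^ 2 := by
    intro f G q X hG hGξ hX κ hκ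
    filter_upwards [hX κ hκ] with h hh hmem
    have a1 := hG (ξ + h) _ hmem
    have : ξ + δ • q + h - (ξ + h) = δ • q := by abel
    rw [this, norm_smul, Real.norm_of_nonneg hδ.le] at a1
    have e : (δ * ‖q‖) ^ 2 / (2 * δ) = δ / 2 * ‖q‖ ^ 2 := by field_simp
    rw [e] at a1
    linarith [(abs_le.1 hh).2]
  refine ⟨ξ + δ • q, ξ + δ • q', q, q', X, Y, hx, hy, hp, hmax, ?_, tr u U q X hU2 hUx hX,
    tr w W q' Y hW2 hWy hY⟩
  -- `X + Y ≤ 0`: the second-order condition for `U + W` minus a linear function to be maximal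
  -- at `ξ`, read off along the ray `t • h`
  intro h
  refine le_of_forall_pos_le_add fun ε hε => ?_
  set κ : ℝ := ε / (4 * (‖h‖ ^ 2 + 1)) with hκ
  have hκ0 : 0 < κ := by positivity
  have lim : Tendsto (fun t : ℝ => t • h) (𝓝[>] 0) (𝓝 0) := by
    have : Tendsto (fun t : ℝ => t • h) (𝓝 0) (𝓝 ((0 : ℝ) • h)) :=
      (continuous_id.smul continuous_const).tendsto 0
    rw [zero_smul] at this
    exact this.mono_left nhdsWithin_le_nhds
  obtain ⟨t, ⟨h1, h2⟩, ht⟩ :=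
    ((lim.eventually ((hX κ hκ0).and (hY κ hκ0))).and self_mem_nhdsWithin).exists
  have ht : 0 < t := ht
  have h3 := htop (ξ + t • h)
  rw [add_sub_cancel_left, inner_add_left] at h3
  simp only [map_smul, real_inner_smul_left, real_inner_smul_right, norm_smul,
    Real.norm_of_nonneg ht.le] at h1 h2 h3
  have h4 : t ^ 2 * (⟪X h, h⟫ + ⟪Y h, h⟫) ≤ t ^ 2 * (4 * κ * ‖h‖ ^ 2) := by
    linarith [(abs_le.1 h1).1, (abs_le.1 h2).1]
  have h5 := le_of_mul_le_mul_left h4 (by positivity)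
  have h6 : 4 * κ * ‖h‖ ^ 2 ≤ ε := by
    rw [hκ]
    have : 4 * (ε / (4 * (‖h‖ ^ 2 + 1))) * ‖h‖ ^ 2 = ε * (‖h‖ ^ 2 / (‖h‖ ^ 2 + 1)) := by
      field_simp
    rw [this]
    refine mul_le_of_le_one_right hε.le ?_
    rw [div_le_one (by positivity)]; linarith
  linarith

end Doubling

/-! ### Quadratic test functions and their Hessian matrices -/

section Matrices

variable {d : ℕ}

/-- The matrix of the symmetric part of `X` in the standard basis. -/
def symMat (X : Eucl d →L[ℝ] Eucl d) : Matrix (Fin d) (Fin d) ℝ :=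
  Matrix.of fun i j =>
    1 / 2 * (⟪X (EuclideanSpace.single i 1), EuclideanSpace.single j (1 : ℝ)⟫ +
      ⟪X (EuclideanSpace.single j 1), EuclideanSpace.single i (1 : ℝ)⟫)

/-- The polynomial `⟪q, x - a⟫ + ⟪X (x - a), x - a⟫ / 2`, with gradient `q` at `a` and Hessian the
symmetric part of `X`. -/
def quadTest (a q : Eucl d) (X : Eucl d →L[ℝ] Eucl d) (x : Eucl d) : ℝ :=
  ⟪q, x - a⟫ + 1 / 2 * ⟪X (x - a), x - a⟫

lemma quadTest_contDiff (a q : Eucl d) (X : Eucl d →L[ℝ] Eucl d) :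
    ContDiff ℝ 2 (quadTest a q X) := by
  unfold quadTest
  have h1 : ContDiff ℝ 2 (fun x : Eucl d => x - a) := contDiff_id.sub contDiff_const
  exact (contDiff_const.inner ℝ h1).add (contDiff_const.mul ((X.contDiff.comp h1).inner ℝ h1))

lemma fderiv_quadTest (a q : Eucl d) (X : Eucl d →L[ℝ] Eucl d) (x w : Eucl d) :
    fderiv ℝ (quadTest a q X) x w = ⟪q, w⟫ + 1 / 2 * (⟪X (x - a), w⟫ + ⟪X w, x - a⟫) := by
  have h1 : HasFDerivAt (fun x : Eucl d => x - a) (ContinuousLinearMap.id ℝ (Eucl d)) x :=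
    (hasFDerivAt_id x).sub_const a
  have h2 : HasFDerivAt (fun x : Eucl d => X (x - a)) (X ∘L ContinuousLinearMap.id ℝ (Eucl d)) x :=
    X.hasFDerivAt.comp x h1
  have h3 := ((hasFDerivAt_const q x).inner ℝ h1).add ((h2.inner ℝ h1).const_mul (1 / 2))
  have h4 : HasFDerivAt (quadTest a q X) _ x := h3
  rw [h4.fderiv]
  simp

lemma gradAt_quadTest (a q : Eucl d) (X : Eucl d →L[ℝ] Eucl d) :
    gradAt (quadTest a q X) a = q := by
  ext i
  simp [gradAt, fderiv_quadTest, EuclideanSpace.inner_single_right]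

lemma hessAt_quadTest (a q : Eucl d) (X : Eucl d →L[ℝ] Eucl d) :
    hessAt (quadTest a q X) a = symMat X := by
  ext i j
  simp only [hessAt, symMat, Matrix.of_apply, fderiv_quadTest]
  set e : Eucl d := EuclideanSpace.single j (1 : ℝ)
  have h1 : HasFDerivAt (fun x : Eucl d => x - a) (ContinuousLinearMap.id ℝ (Eucl d)) a :=
    (hasFDerivAt_id a).sub_const a
  have h2 : HasFDerivAt (fun x : Eucl d => X (x - a)) (X ∘L ContinuousLinearMap.id ℝ (Eucl d)) a :=
    X.hasFDerivAt.comp a h1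
  have h3 := (((h2.inner ℝ (hasFDerivAt_const e a)).add
    ((hasFDerivAt_const (X e) a).inner ℝ h1)).const_mul (1 / 2)).const_add ⟪q, e⟫
  have h4 : HasFDerivAt (fun y => ⟪q, e⟫ + 1 / 2 * (⟪X (y - a), e⟫ + ⟪X e, y - a⟫)) _ a := h3
  rw [h4.fderiv]
  simp
  ring

lemma symMat_isSymm (X : Eucl d →L[ℝ] Eucl d) : (symMat X).IsSymm := by
  ext i j; simp [symMat, add_comm]

lemma symMat_zero : symMat (0 : Eucl d →L[ℝ] Eucl d) = 0 := by
  ext i j; simp [symMat]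

lemma symMat_add (X Y : Eucl d →L[ℝ] Eucl d) : symMat (X + Y) = symMat X + symMat Y := by
  ext i j; simp [symMat, inner_add_left]; ring

lemma symMat_smul_id (c : ℝ) : symMat (c • ContinuousLinearMap.id ℝ (Eucl d)) = c • 1 := by
  ext i j
  by_cases h : i = j
  · subst h; simp [symMat, EuclideanSpace.inner_single_right]; ring
  · simp [symMat, EuclideanSpace.inner_single_right, h, Ne.symm h]

lemma symMat_posSemidef {X : Eucl d →L[ℝ] Eucl d} (hX : ∀ h, 0 ≤ ⟪X h, h⟫) :
    (symMat X).PosSemidef := by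
  refine Matrix.PosSemidef.of_dotProduct_mulVec_nonneg ?_ fun x => ?_
  · rw [Matrix.IsHermitian, Matrix.conjTranspose_eq_transpose_of_trivial]
    exact symMat_isSymm X
  · have hx : WithLp.toLp 2 x = ∑ i, x i • (EuclideanSpace.single i (1 : ℝ) : Eucl d) := by
      ext j
      simp [Finset.sum_apply, Pi.single_apply]
    have key : star x ⬝ᵥ (symMat X).mulVec x = ⟪X (WithLp.toLp 2 x), WithLp.toLp 2 x⟫ := by
      rw [hx]
      simp only [map_sum, map_smul, sum_inner, inner_sum, real_inner_smul_left,
        real_inner_smul_right, dotProduct, Matrix.mulVec, symMat, Matrix.of_apply, star_trivial,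
        Finset.mul_sum]
      -- a quadratic form does not see the symmetrization of its coefficients
      have swap : ∀ b : Fin d → Fin d → ℝ, ∑ i, ∑ j, x i * (1 / 2 * (b i j + b j i) * x j) =
          ∑ i, ∑ j, x i * (x j * b j i) := by
        intro b
        have s1 : ∑ i, ∑ j, x i * (x j * b j i) = ∑ i, ∑ j, x i * (x j * b i j) := by
          rw [Finset.sum_comm]
          exact Finset.sum_congr rfl fun i _ => Finset.sum_congr rfl fun j _ => by ring
        have s2 : ∑ i, ∑ j, x i * (1 / 2 * (b i j + b j i) * x j) =
            1 / 2 * (∑ i, ∑ j, x i * (x j * b i j) + ∑ i, ∑ j, x i * (x j * b j i)) := by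
          rw [← Finset.sum_add_distrib, Finset.mul_sum]
          refine Finset.sum_congr rfl fun i _ => ?_
          rw [← Finset.sum_add_distrib, Finset.mul_sum]
          exact Finset.sum_congr rfl fun j _ => by ring
        rw [s2, s1]; ring
      exact swap fun i j =>
        ⟪X (EuclideanSpace.single i 1), EuclideanSpace.single j (1 : ℝ)⟫
    rw [key]; exact hX _

lemma specNorm_nonneg (M : Matrix (Fin d) (Fin d) ℝ) : 0 ≤ specNorm M :=
  Real.iSup_nonneg fun _ => abs_nonneg _

lemma specNorm_smul_one_le {c : ℝ} (hc : 0 ≤ c) :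
    specNorm (c • (1 : Matrix (Fin d) (Fin d) ℝ)) ≤ c := by
  have hh : (c • (1 : Matrix (Fin d) (Fin d) ℝ)).IsHermitian := by
    simp [Matrix.IsHermitian]
  refine Real.iSup_le (fun i => ?_) hc
  have h1 := hh.mulVec_eigenvectorBasis i
  rw [Matrix.smul_mulVec, Matrix.one_mulVec] at h1
  have h2 : (hh.eigenvectorBasis i).ofLp ≠ 0 := by
    intro h0
    have := hh.eigenvectorBasis.orthonormal.ne_zero i
    exact this (by ext j; simp [h0])
  have h3 := smul_left_injective ℝ h2 h1
  rw [eigs, dif_pos hh, ← h3, abs_of_nonneg hc]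

lemma pucciMinus_zero (lam Lam : ℝ) : pucciMinus lam Lam (0 : Matrix (Fin d) (Fin d) ℝ) = 0 := by
  have h0 : eigs (0 : Matrix (Fin d) (Fin d) ℝ) = 0 := by
    rw [eigs]
    split_ifs with h
    · exact h.eigenvalues_eq_zero_iff.2 rfl
    · rfl
  simp [pucciMinus, posPartTrace, negPartTrace, h0]

end Matrices

/-! ### Comparison of a subsolution with a supersolution -/

section Comparison

variable {d : ℕ} {lam Lam gam : ℝ} {Ω : Set (Eucl d)}
  {F : Matrix (Fin d) (Fin d) ℝ → Eucl d → ℝ → Eucl d → ℝ → ℝ} {ω : ℝ → ℝ → ℝ} {σ₁ σ₂ : ℝ → ℝ}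

/-- `F` is nondecreasing in the value argument, up to the Lipschitz dependence on the gradient:
the modulus in the structure condition vanishes when `s ≤ r`. -/
lemma StructureCondition.mono_value {Kc : Set (Eucl d)} {Tset : Set ℝ}
    (hstr : StructureCondition lam Lam gam ω Kc Tset F) {M : Matrix (Fin d) (Fin d) ℝ}
    (hM : M.IsSymm) (P Q : Eucl d) {r s : ℝ} (hrs : s ≤ r) {x : Eucl d} (hx : x ∈ Kc) {t : ℝ}
    (ht : t ∈ Tset) : F M Q s x t ≤ F M P r x t + gam * ‖P - Q‖ := by
  have hR : 0 < |r| + |s| + 1 := by positivity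
  have := (hstr.2 (|r| + |s| + 1) hR M M hM hM P Q r s (by linarith [abs_nonneg s])
    (by linarith [abs_nonneg r]) x hx t ht).1
  rw [sub_self, pucciMinus_zero, max_eq_right (by linarith), (hstr.1 _ hR).2.2] at this
  linarith

/-- The ordering `X + Y ≤ 0` of the second-order parts, with the regularization `2 * κ`, orders the
values of `F` at the two points of the doubling up to errors that become small with `κ`, `q + q'` and
`x - y`. In terms of matrices, `M₁ + N = M₂ + 4 κ I` with `N` positive semidefinite. -/
lemma operator_gap {Kc : Set (Eucl d)} {Tset : Set ℝ} (hlam : 0 < lam) (hLam : lam ≤ Lam)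
    (hell : UniformlyElliptic lam Lam Kc Tset F)
    (hstr : StructureCondition lam Lam gam ω Kc Tset F)
    (hmod : ∀ (M : Matrix (Fin d) (Fin d) ℝ) (P : Eucl d) (r : ℝ),
      ∀ x ∈ Kc, ∀ y ∈ Kc, ∀ t ∈ Tset, ∀ s ∈ Tset,
        |F M P r x t - F M P r y s| ≤ σ₁ ‖x - y‖ + σ₂ |t - s|)
    {x y : Eucl d} (hx : x ∈ Kc) (hy : y ∈ Kc) {t s : ℝ} (ht : t ∈ Tset) (hs : s ∈ Tset)
    {r₁ r₂ : ℝ} (hr : r₂ ≤ r₁) (q q' : Eucl d) {X Y : Eucl d →L[ℝ] Eucl d}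
    (hXY : ∀ h, ⟪X h, h⟫ + ⟪Y h, h⟫ ≤ 0) {κ : ℝ} (hκ : 0 < κ) :
    F (symMat (-(Y + (2 * κ) • ContinuousLinearMap.id ℝ (Eucl d)))) (-q') r₂ y s ≤
      F (symMat (X + (2 * κ) • ContinuousLinearMap.id ℝ (Eucl d))) q r₁ x t +
        Lam * (4 * κ) + gam * ‖q + q'‖ + σ₁ ‖x - y‖ + σ₂ |t - s| := by
  set M₁ := symMat (X + (2 * κ) • ContinuousLinearMap.id ℝ (Eucl d)) with hM₁
  set M₂ := symMat (-(Y + (2 * κ) • ContinuousLinearMap.id ℝ (Eucl d))) with hM₂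
  have hN : (symMat (-(X + Y))).PosSemidef := symMat_posSemidef fun h => by
    have := hXY h
    simp only [_root_.neg_apply, _root_.add_apply, inner_neg_left,
      inner_add_left]
    linarith
  have hI : ((4 * κ) • (1 : Matrix (Fin d) (Fin d) ℝ)).PosSemidef := by
    rw [← symMat_smul_id]
    refine symMat_posSemidef fun h => ?_
    simp only [_root_.smul_apply, ContinuousLinearMap.id_apply, real_inner_smul_left]
    exact mul_nonneg (by positivity) real_inner_self_nonneg
  have hsum : M₁ + symMat (-(X + Y)) = M₂ + (4 * κ) • 1 := by
    rw [hM₁, hM₂, ← symMat_smul_id, ← symMat_add, ← symMat_add]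
    congr 1
    module
  have a1 := (hell M₁ _ (symMat_isSymm _) hN q r₁ x hx t ht).2
  rw [hsum] at a1
  have a2 := (hell M₂ _ (symMat_isSymm _) hI q r₁ x hx t ht).1
  have a3 := hstr.mono_value (symMat_isSymm (-(Y + (2 * κ) • ContinuousLinearMap.id ℝ (Eucl d))))
    q (-q') hr hx ht
  rw [sub_neg_eq_add, ← hM₂] at a3
  have a4 := (abs_le.1 (hmod M₂ (-q') r₂ x hx y hy t ht s hs)).1
  have a5 := mul_le_mul_of_nonneg_left (specNorm_smul_one_le (d := d) (by positivity : 0 ≤ 4 * κ))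
    (by linarith : 0 ≤ Lam)
  have a6 := mul_nonneg hlam.le (specNorm_nonneg (symMat (-(X + Y))))
  linarith

/-- The subsolution inequality may be tested with an upper bound by a quadratic polynomial plus
`κ * ‖h‖ ^ 2`; the latter contributes `2 * κ` times the identity to the Hessian. -/
lemma ViscSubsol.of_quadratic
    {G : Matrix (Fin d) (Fin d) ℝ → Eucl d → ℝ → Eucl d → ℝ} {g u : Eucl d → ℝ}
    (hu : ViscSubsol Ω G g u) (hΩ : IsOpen Ω) {x q : Eucl d} (hx : x ∈ Ω)
    {X : Eucl d →L[ℝ] Eucl d} {κ : ℝ}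
    (hq : ∀ᶠ h in 𝓝 (0 : Eucl d), x + h ∈ closure Ω →
      u (x + h) ≤ u x + ⟪q, h⟫ + 1 / 2 * ⟪X h, h⟫ + κ * ‖h‖ ^ 2) :
    G (symMat (X + (2 * κ) • ContinuousLinearMap.id ℝ (Eucl d))) q (u x) x ≤ g x := by
  have := hu x hx (quadTest x q (X + (2 * κ) • ContinuousLinearMap.id ℝ (Eucl d)))
    (quadTest_contDiff _ _ _).contDiffAt ?_
  · rwa [hessAt_quadTest, gradAt_quadTest] at this
  · have lim : Tendsto (fun y : Eucl d => y - x) (𝓝 x) (𝓝 0) := by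
      have : Continuous fun y : Eucl d => y - x := by fun_prop
      simpa using this.tendsto x
    filter_upwards [lim.eventually hq, hΩ.mem_nhds hx] with y h1 h2
    have h3 := h1 (by rw [add_sub_cancel]; exact subset_closure h2)
    rw [add_sub_cancel] at h3
    simp only [quadTest, sub_self, map_zero, inner_zero_right, _root_.add_apply,
      _root_.smul_apply, ContinuousLinearMap.id_apply, inner_add_left,
      real_inner_smul_left, real_inner_self_eq_norm_sq]
    linarith

/-- The counterpart of `ViscSubsol.of_quadratic` for supersolutions, in terms of an upper bound
for `-v`. -/
lemma ViscSupersol.of_quadratic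
    {G : Matrix (Fin d) (Fin d) ℝ → Eucl d → ℝ → Eucl d → ℝ} {g v : Eucl d → ℝ}
    (hv : ViscSupersol Ω G g v) (hΩ : IsOpen Ω) {x q : Eucl d} (hx : x ∈ Ω)
    {Y : Eucl d →L[ℝ] Eucl d} {κ : ℝ}
    (hq : ∀ᶠ h in 𝓝 (0 : Eucl d), x + h ∈ closure Ω →
      -v (x + h) ≤ -v x + ⟪q, h⟫ + 1 / 2 * ⟪Y h, h⟫ + κ * ‖h‖ ^ 2) :
    g x ≤ G (symMat (-(Y + (2 * κ) • ContinuousLinearMap.id ℝ (Eucl d)))) (-q) (v x) x := by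
  have := hv x hx (quadTest x (-q) (-(Y + (2 * κ) • ContinuousLinearMap.id ℝ (Eucl d))))
    (quadTest_contDiff _ _ _).contDiffAt ?_
  · rwa [hessAt_quadTest, gradAt_quadTest] at this
  · have lim : Tendsto (fun y : Eucl d => y - x) (𝓝 x) (𝓝 0) := by
      have : Continuous fun y : Eucl d => y - x := by fun_prop
      simpa using this.tendsto x
    filter_upwards [lim.eventually hq, hΩ.mem_nhds hx] with y h1 h2
    have h3 := h1 (by rw [add_sub_cancel]; exact subset_closure h2)
    rw [add_sub_cancel] at h3
    simp only [quadTest, sub_self, map_zero, inner_zero_right, _root_.add_apply,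
      _root_.neg_apply, inner_neg_left,
      _root_.smul_apply, ContinuousLinearMap.id_apply, inner_add_left,
      real_inner_smul_left, real_inner_self_eq_norm_sq]
    linarith

/-- Comparison between two consecutive implicit steps at times `t` and `s` with right-hand sides
`a / h` and `b / h`. If the conclusion failed, the doubled maximum would be interior, by the boundary
ordering, and subtracting the two viscosity inequalities there would contradict `a - b ≤ D`. The zeroth
order term `r / h` is what gives the bound, so that no smallness of `Ω` or `gam` is needed. -/
lemma comparison (hlam : 0 < lam) (hLam : lam ≤ Lam) (hgam : 0 ≤ gam)
    (hΩ : IsOpen Ω) (hbd : Bornology.IsBounded Ω)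
    (hell : UniformlyElliptic lam Lam (closure Ω) (Ici 0) F)
    (hstr : StructureCondition lam Lam gam ω (closure Ω) (Ici 0) F)
    (hσ₁ : IsModulus σ₁) (hσ₂ : IsModulus σ₂)
    (hmod : ∀ (M : Matrix (Fin d) (Fin d) ℝ) (P : Eucl d) (r : ℝ),
      ∀ x ∈ closure Ω, ∀ y ∈ closure Ω, ∀ t ∈ Ici (0:ℝ), ∀ s ∈ Ici (0:ℝ),
        |F M P r x t - F M P r y s| ≤ σ₁ ‖x - y‖ + σ₂ |t - s|)
    {h : ℝ} (hh : 0 < h) {t s : ℝ} (ht : 0 ≤ t) (hs : 0 ≤ s) {a b u v : Eucl d → ℝ}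
    (hb : ContinuousOn b (closure Ω))
    (hu : ContinuousOn u (closure Ω)) (hv : ContinuousOn v (closure Ω))
    (hus : ViscSubsol Ω (fun M P r x => F M P r x t + r / h) (fun x => a x / h) u)
    (hvs : ViscSupersol Ω (fun M P r x => F M P r x s + r / h) (fun x => b x / h) v)
    (hbdry : ∀ x ∈ frontier Ω, u x ≤ v x) {D : ℝ} (hD : 0 ≤ D)
    (hab : ∀ x ∈ closure Ω, a x - b x ≤ D) :
    ∀ x ∈ closure Ω, u x - v x ≤ D + h * σ₂ |t - s| := by
  have hσ₂0 : 0 ≤ σ₂ |t - s| := by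
    rw [← hσ₂.2.2]; exact hσ₂.1 (abs_nonneg _)
  intro x₀ hx₀
  by_contra! hcon
  have hK : IsCompact (closure Ω) := hbd.isCompact_closure
  set m : ℝ := u x₀ - v x₀ with hm
  have hm0 : 0 < m := lt_of_le_of_lt (by positivity) hcon
  -- every error below is at most `ε`; the factor `1 + h` accounts for those that are
  -- multiplied by `h`
  set ε : ℝ := min (m / 4) ((m - (D + h * σ₂ |t - s|)) / (4 * (1 + h))) with hε
  have hε0 : 0 < ε := lt_min (by positivity) (div_pos (by linarith) (by positivity))
  have hε1 : ε ≤ m / 4 := min_le_left _ _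
  have hε2 : ε * (4 * (1 + h)) ≤ m - (D + h * σ₂ |t - s|) := by
    have := min_le_right (m / 4) ((m - (D + h * σ₂ |t - s|)) / (4 * (1 + h)))
    rw [← hε] at this
    rwa [le_div_iff₀ (by positivity)] at this
  obtain ⟨η₁, hη₁, hb'⟩ := Metric.uniformContinuousOn_iff.1
    (hK.uniformContinuousOn_of_continuous hb) ε hε0
  obtain ⟨η₂, hη₂, hv'⟩ := Metric.uniformContinuousOn_iff.1
    (hK.uniformContinuousOn_of_continuous hv) ε hε0
  obtain ⟨η₄, hη₄, hu'⟩ := Metric.uniformContinuousOn_iff.1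
    (hK.uniformContinuousOn_of_continuous hu) ε hε0
  obtain ⟨η₃, hη₃, hσ'⟩ := Metric.continuous_iff.1 hσ₁.2.1 0 ε hε0
  obtain ⟨Ru, hRu⟩ := (hK.image_of_continuousOn hu).isBounded.exists_norm_le
  obtain ⟨Rv, hRv⟩ := (hK.image_of_continuousOn hv).isBounded.exists_norm_le
  obtain ⟨R, hR⟩ := hK.isBounded.exists_norm_le
  have hR0 : 0 ≤ R := (norm_nonneg _).trans (hR x₀ hx₀)
  set η : ℝ := min (min η₁ η₂) (min η₃ η₄) with hη
  have hη0 : 0 < η := lt_min (lt_min hη₁ hη₂) (lt_min hη₃ hη₄)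
  have hRu' : ∀ x ∈ closure Ω, |u x| ≤ Ru := fun x hx => hRu _ (mem_image_of_mem u hx)
  have hRv' : ∀ x ∈ closure Ω, |v x| ≤ Rv := fun x hx => hRv _ (mem_image_of_mem v hx)
  have hBpos : 0 ≤ Ru + Rv :=
    add_nonneg ((abs_nonneg _).trans (hRu' x₀ hx₀)) ((abs_nonneg _).trans (hRv' x₀ hx₀))
  set ρ : ℝ := min (ε / (2 * R + 1)) (ε / (gam + 1)) with hρ
  have hρ0 : 0 < ρ := lt_min (by positivity) (by positivity)
  have hρ1 : 2 * R * ρ ≤ ε := by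
    have h1 : ρ * (2 * R + 1) ≤ ε := by
      rw [← le_div_iff₀ (by positivity)]; exact min_le_left _ _
    linarith
  have hρ2 : gam * ρ ≤ ε := by
    have h1 : ρ * (gam + 1) ≤ ε := by
      rw [← le_div_iff₀ (by positivity)]; exact min_le_right _ _
    linarith
  -- small enough for the penalty to force `‖x - y‖ < η`
  set δ : ℝ := η ^ 2 / (8 * (Ru + Rv + 1)) with hδ
  have hδ0 : 0 < δ := by positivity
  obtain ⟨x, y, q, q', X, Y, hx, hy, hqρ, hmax, hXY, hX, hY⟩ :=
    doubling hK ⟨x₀, hx₀⟩ hu hv.neg hδ0 hρ0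
  have inn : ∀ z ∈ closure Ω, ∀ z' ∈ closure Ω, |⟪q + q', z + z'⟫| ≤ 2 * R * ρ := by
    intro z hz z' hz'
    refine (abs_real_inner_le_norm _ _).trans ?_
    have : ‖z + z'‖ ≤ 2 * R := (norm_add_le _ _).trans (by linarith [hR z hz, hR z' hz'])
    calc _ ≤ ρ * (2 * R) := by gcongr
      _ = _ := by ring
  have i1 := abs_le.1 (inn x hx y hy)
  have i2 := abs_le.1 (inn x₀ hx₀ x₀ hx₀)
  have h1 := hmax x₀ hx₀ x₀ hx₀
  simp only [sub_self, norm_zero, ne_eq, OfNat.ofNat_ne_zero, not_false_eq_true, zero_pow,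
    zero_div, Pi.neg_apply] at h1
  have hpen : 0 ≤ ‖x - y‖ ^ 2 / (4 * δ) := by positivity
  have hlow : m - ε ≤ u x - v y := by linarith
  have hxy : ‖x - y‖ < η := by
    have h2 : ‖x - y‖ ^ 2 / (4 * δ) ≤ Ru + Rv := by
      linarith [(abs_le.1 (hRu' x hx)).2, (abs_le.1 (hRv' y hy)).1]
    rw [div_le_iff₀ (by positivity)] at h2
    have h3 : (Ru + Rv) * (4 * δ) < η ^ 2 := by
      have : δ * (8 * (Ru + Rv + 1)) = η ^ 2 := by rw [hδ]; field_simp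
      nlinarith
    exact lt_of_pow_lt_pow_left₀ 2 hη0.le (h2.trans_lt h3)
  have hη₁' : η ≤ η₁ := (min_le_left _ _).trans (min_le_left _ _)
  have hη₂' : η ≤ η₂ := (min_le_left _ _).trans (min_le_right _ _)
  have hη₃' : η ≤ η₃ := (min_le_right _ _).trans (min_le_left _ _)
  have hη₄' : η ≤ η₄ := (min_le_right _ _).trans (min_le_right _ _)
  have hd : dist x y < η := by rwa [dist_eq_norm]
  have c1 : |b x - b y| < ε := hb' x hx y hy (hd.trans_le hη₁')
  have c2 : |v x - v y| < ε := hv' x hx y hy (hd.trans_le hη₂')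
  have c4 : |u x - u y| < ε := hu' x hx y hy (hd.trans_le hη₄')
  have c3 : σ₁ ‖x - y‖ < ε := by
    have := hσ' ‖x - y‖ (by
      rw [Real.dist_eq, sub_zero, abs_norm]
      exact hxy.trans_le hη₃')
    rw [hσ₁.2.2, Real.dist_eq, sub_zero] at this
    exact (le_abs_self _).trans_lt this
  rw [abs_lt] at c1 c2 c4
  have hxΩ : x ∈ Ω := by
    by_contra hn
    have := hbdry x (by rw [hΩ.frontier_eq]; exact ⟨hx, hn⟩)
    linarith
  have hyΩ : y ∈ Ω := by
    by_contra hn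
    have := hbdry y (by rw [hΩ.frontier_eq]; exact ⟨hy, hn⟩)
    linarith
  have hLam0 : 0 < Lam := hlam.trans_le hLam
  set κ : ℝ := ε / (4 * (Lam + 1)) with hκ
  have hκ0 : 0 < κ := by positivity
  have hκ1 : Lam * (4 * κ) ≤ ε := by
    have : κ * (4 * (Lam + 1)) = ε := by rw [hκ]; field_simp
    linarith
  have s1 := hus.of_quadratic hΩ hxΩ (hX κ hκ0)
  have s2 := hvs.of_quadratic hΩ hyΩ (q := q') (hY κ hκ0)
  have gap := operator_gap hlam hLam hell hstr hmod hx hy (mem_Ici.2 ht) (mem_Ici.2 hs)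
    (by linarith : v y ≤ u x) q q' hXY hκ0
  have hgq : gam * ‖q + q'‖ ≤ ε := (mul_le_mul_of_nonneg_left hqρ.le hgam).trans hρ2
  have e1 : (u x - v y) / h ≤ (a x - b y) / h + (3 * ε + σ₂ |t - s|) := by
    rw [sub_div, sub_div]; linarith
  have e2 : u x - v y ≤ a x - b y + h * (3 * ε + σ₂ |t - s|) := by
    have := mul_le_mul_of_nonneg_left e1 hh.le
    rwa [mul_add, mul_div_cancel₀ _ hh.ne', mul_div_cancel₀ _ hh.ne'] at this
  have e3 := hab x hx
  have e4 : 0 < h * ε := by positivity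
  linarith

end Comparison

/-! ### The Rothe increments -/

section SupNorm

variable {d : ℕ} {Ω : Set (Eucl d)}

lemma supNorm_nonneg (u : Eucl d → ℝ) : 0 ≤ supNorm Ω u :=
  Real.sSup_nonneg (by rintro _ ⟨y, _, rfl⟩; exact abs_nonneg _)

lemma supNorm_le {u : Eucl d → ℝ} {B : ℝ} (hB : 0 ≤ B) (h : ∀ x ∈ closure Ω, |u x| ≤ B) :
    supNorm Ω u ≤ B :=
  Real.sSup_le (by rintro _ ⟨y, hy, rfl⟩; exact h y hy) hB

lemma le_supNorm (hbd : Bornology.IsBounded Ω) {u : Eucl d → ℝ}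
    (hu : ContinuousOn u (closure Ω)) {x : Eucl d} (hx : x ∈ closure Ω) :
    |u x| ≤ supNorm Ω u :=
  le_csSup (hbd.isCompact_closure.image_of_continuousOn hu.abs).bddAbove
    (mem_image_of_mem (fun y => |u y|) hx)

end SupNorm

section Rothe

variable {d : ℕ} {lam Lam gam : ℝ} {Ω : Set (Eucl d)}
  {F : Matrix (Fin d) (Fin d) ℝ → Eucl d → ℝ → Eucl d → ℝ → ℝ} {ω : ℝ → ℝ → ℝ} {σ₁ σ₂ : ℝ → ℝ}

/-- `‖z₁‖ ≤ K h`: a constant is an admissible test function at an interior positive maximum or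
negative minimum of `z₁`. -/
lemma first_step_le (hΩ : IsOpen Ω) (hbd : Bornology.IsBounded Ω)
    (hstr : StructureCondition lam Lam gam ω (closure Ω) (Ici 0) F) {K : ℝ} (hK : 0 ≤ K)
    (hF : ∀ x ∈ closure Ω, ∀ t ∈ Ici (0:ℝ), |F 0 0 0 x t| ≤ K) {h : ℝ} (hh : 0 < h)
    {z₀ z₁ : Eucl d → ℝ} (hz₀ : ∀ x, z₀ x = 0) (hz : RotheStep Ω F h 0 z₀ z₁) :
    supNorm Ω z₁ ≤ K * h := by
  obtain ⟨hc, ⟨hsub, hsup⟩, hbdry⟩ := hz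
  have hcomp : IsCompact (closure Ω) := hbd.isCompact_closure
  have hKh : 0 ≤ K * h := by positivity
  have ht : (((0 : ℕ) : ℝ) + 1) * h ∈ Ici (0 : ℝ) := by rw [mem_Ici]; positivity
  generalize (((0 : ℕ) : ℝ) + 1) * h = τ at hsub hsup ht
  have h00 : symMat ((0 : Eucl d →L[ℝ] Eucl d) +
      (2 * (0 : ℝ)) • ContinuousLinearMap.id ℝ (Eucl d)) = 0 := by
    rw [← symMat_zero]; congr 1; module
  have h00' : symMat (-((0 : Eucl d →L[ℝ] Eucl d) +
      (2 * (0 : ℝ)) • ContinuousLinearMap.id ℝ (Eucl d))) = 0 := by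
    rw [← symMat_zero]; congr 1; module
  have hS : (0 : Matrix (Fin d) (Fin d) ℝ).IsSymm := Matrix.isSymm_zero
  refine supNorm_le hKh fun x hx => abs_le.2 ⟨?_, ?_⟩
  · obtain ⟨p, hp, hmin⟩ := hcomp.exists_isMinOn ⟨x, hx⟩ hc
    refine le_trans ?_ (hmin hx)
    by_contra! hlt
    have hpΩ : p ∈ Ω := by
      by_contra hn
      have := hbdry p (by rw [hΩ.frontier_eq]; exact ⟨hp, hn⟩)
      linarith
    have s := hsup.of_quadratic hΩ hpΩ (q := 0) (Y := 0) (κ := 0)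
      (Eventually.of_forall fun w hw => by
        have := hmin hw
        simp only [mem_ofPred_eq] at this
        simpa using this)
    rw [h00', neg_zero] at s
    simp only [hz₀, zero_div] at s
    have s2 := hstr.mono_value hS 0 0 (by linarith : z₁ p ≤ 0) hp ht
    rw [sub_zero, norm_zero, mul_zero, add_zero] at s2
    have s3 := (abs_le.1 (hF p hp _ ht)).2
    have s4 : -K ≤ z₁ p / h := by linarith
    rw [le_div_iff₀ hh] at s4
    linarith
  · obtain ⟨p, hp, hmax⟩ := hcomp.exists_isMaxOn ⟨x, hx⟩ hc
    refine le_trans (hmax hx) ?_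
    by_contra! hlt
    have hpΩ : p ∈ Ω := by
      by_contra hn
      have := hbdry p (by rw [hΩ.frontier_eq]; exact ⟨hp, hn⟩)
      linarith
    have s := hsub.of_quadratic hΩ hpΩ (q := 0) (X := 0) (κ := 0)
      (Eventually.of_forall fun w hw => by
        have := hmax hw
        simp only [mem_ofPred_eq] at this
        simpa using this)
    rw [h00] at s
    simp only [hz₀, zero_div] at s
    have s2 := hstr.mono_value hS 0 0 (by linarith : 0 ≤ z₁ p) hp ht
    rw [sub_zero, norm_zero, mul_zero, add_zero] at s2
    have s3 := (abs_le.1 (hF p hp _ ht)).1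
    have s4 : z₁ p / h ≤ K := by linarith
    rw [div_le_iff₀ hh] at s4
    linarith

/-- One step of the induction, obtained from two applications of `comparison` to consecutive Rothe
steps, in both orders. -/
lemma rothe_increment_le (hlam : 0 < lam) (hLam : lam ≤ Lam) (hgam : 0 ≤ gam)
    (hΩ : IsOpen Ω) (hbd : Bornology.IsBounded Ω)
    (hell : UniformlyElliptic lam Lam (closure Ω) (Ici 0) F)
    (hstr : StructureCondition lam Lam gam ω (closure Ω) (Ici 0) F)
    (hσ₁ : IsModulus σ₁) (hσ₂ : IsModulus σ₂)
    (hmod : ∀ (M : Matrix (Fin d) (Fin d) ℝ) (P : Eucl d) (r : ℝ),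
      ∀ x ∈ closure Ω, ∀ y ∈ closure Ω, ∀ t ∈ Ici (0:ℝ), ∀ s ∈ Ici (0:ℝ),
        |F M P r x t - F M P r y s| ≤ σ₁ ‖x - y‖ + σ₂ |t - s|)
    {h : ℝ} (hh : 0 < h) {m : ℕ} {z₀ z₁ z₂ : Eucl d → ℝ} (hz₀ : ContinuousOn z₀ (closure Ω))
    (hz₁ : RotheStep Ω F h m z₀ z₁) (hz₂ : RotheStep Ω F h (m + 1) z₁ z₂) :
    supNorm Ω (fun x => z₂ x - z₁ x) ≤ supNorm Ω (fun x => z₁ x - z₀ x) + h * σ₂ h := by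
  have hD := supNorm_nonneg (Ω := Ω) (fun x => z₁ x - z₀ x)
  have hσ0 : 0 ≤ σ₂ h := by rw [← hσ₂.2.2]; exact hσ₂.1 hh.le
  have hle : ∀ x ∈ closure Ω, |z₁ x - z₀ x| ≤ supNorm Ω (fun x => z₁ x - z₀ x) :=
    fun x hx => le_supNorm hbd (hz₁.1.sub hz₀) hx
  have ht : 0 ≤ (((m + 1 : ℕ) : ℝ) + 1) * h := by positivity
  have hs : 0 ≤ ((m : ℝ) + 1) * h := by positivity
  have hts : |(((m + 1 : ℕ) : ℝ) + 1) * h - ((m : ℝ) + 1) * h| = h := by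
    push_cast
    rw [show ((m : ℝ) + 1 + 1) * h - (m + 1) * h = h by ring, abs_of_pos hh]
  have up := comparison hlam hLam hgam hΩ hbd hell hstr hσ₁ hσ₂ hmod hh ht hs hz₀ hz₂.1 hz₁.1
    hz₂.2.1.1 hz₁.2.1.2 (fun x hx => by rw [hz₂.2.2 x hx, hz₁.2.2 x hx]) hD
    (fun x hx => (abs_le.1 (hle x hx)).2)
  have lo := comparison hlam hLam hgam hΩ hbd hell hstr hσ₁ hσ₂ hmod hh hs ht hz₁.1 hz₁.1 hz₂.1
    hz₁.2.1.1 hz₂.2.1.2 (fun x hx => by rw [hz₂.2.2 x hx, hz₁.2.2 x hx]) hD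
    (fun x hx => by linarith [(abs_le.1 (hle x hx)).1])
  rw [hts] at up
  rw [abs_sub_comm, hts] at lo
  refine supNorm_le (by positivity) fun x hx => abs_le.2 ⟨?_, up x hx⟩
  linarith [lo x hx]

end Rothe

/-- **Iterated inductive estimation and the Lipschitz-in-time bound.**  Under the
hypotheses of the inductive estimation one has
`‖z_{n+1,h} - z_{n,h}‖_∞ ≤ ‖z_{1,h}‖_∞ + n h σ₂(h)` for every `n ≥ 0`; consequently, if
`σ₂(h) ≤ C₀ h`, there is `C` depending only on `K, C₀, T` (not on `h`) with
`‖z_{n+1,h} - z_{n,h}‖_∞ ≤ C h` for `n = ⌊T/h⌋`. -/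
theorem iterated_inductive_estimation (K C₀ T : ℝ)
    (hK : 0 ≤ K) (hC₀ : 0 ≤ C₀) (hT : 0 < T) :
    ∃ C : ℝ, ∀ (d : ℕ) (lam Lam gam : ℝ),
      0 < lam → lam ≤ Lam → 0 ≤ gam →
      ∀ (Ω : Set (Eucl d)), IsOpen Ω → Bornology.IsBounded Ω →
      ∀ (F : Matrix (Fin d) (Fin d) ℝ → Eucl d → ℝ → Eucl d → ℝ → ℝ)
        (ω : ℝ → ℝ → ℝ) (σ₁ σ₂ : ℝ → ℝ),
        ContinuousOn
          (fun q : Matrix (Fin d) (Fin d) ℝ × Eucl d × ℝ × Eucl d × ℝ =>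
            F q.1 q.2.1 q.2.2.1 q.2.2.2.1 q.2.2.2.2)
          (univ ×ˢ univ ×ˢ univ ×ˢ closure Ω ×ˢ Ici 0) →
        UniformlyElliptic lam Lam (closure Ω) (Ici 0) F →
        StructureCondition lam Lam gam ω (closure Ω) (Ici 0) F →
        IsModulus σ₁ → IsModulus σ₂ →
        (∀ (M : Matrix (Fin d) (Fin d) ℝ) (P : Eucl d) (r : ℝ),
          ∀ x ∈ closure Ω, ∀ y ∈ closure Ω, ∀ t ∈ Ici (0:ℝ), ∀ s ∈ Ici (0:ℝ),
            |F M P r x t - F M P r y s| ≤ σ₁ ‖x - y‖ + σ₂ |t - s|) →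
        (∀ x ∈ closure Ω, ∀ t ∈ Ici (0:ℝ), |F 0 0 0 x t| ≤ K) →
        ∀ h : ℝ, h ∈ Ioc (0:ℝ) 1 →
          ∀ z : ℕ → Eucl d → ℝ, (∀ x, z 0 x = 0) →
            (∀ m : ℕ, RotheStep Ω F h m (z m) (z (m + 1))) →
            (∀ m : ℕ, supNorm Ω (fun x => z (m + 1) x - z m x) ≤
                supNorm Ω (z 1) + (m : ℝ) * h * σ₂ h) ∧
            ((∀ h' ∈ Ioc (0:ℝ) 1, σ₂ h' ≤ C₀ * h') →
              supNorm Ω (fun x => z (⌊T / h⌋₊ + 1) x - z ⌊T / h⌋₊ x) ≤ C * h) := by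
  refine ⟨K + T * C₀, ?_⟩
  intro d lam Lam gam hlam hLam hgam Ω hΩ hbd F ω σ₁ σ₂ _ hell hstr hσ₁ hσ₂ hmod hF h hh z hz0 hz
  obtain ⟨hh0, hh1⟩ := hh
  have hcont : ∀ m, ContinuousOn (z m) (closure Ω) := by
    rintro (_ | m)
    · rw [funext hz0]; exact continuousOn_const
    · exact (hz m).1
  have main : ∀ m : ℕ, supNorm Ω (fun x => z (m + 1) x - z m x) ≤
      supNorm Ω (z 1) + (m : ℝ) * h * σ₂ h := by
    intro m
    induction m with
    | zero => simp [hz0]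
    | succ m ih =>
      have := rothe_increment_le hlam hLam hgam hΩ hbd hell hstr hσ₁ hσ₂ hmod hh0 (hcont m)
        (hz m) (hz (m + 1))
      push_cast
      linarith
  refine ⟨main, fun hC => ?_⟩
  have h1 := main ⌊T / h⌋₊
  have h2 := first_step_le hΩ hbd hstr hK hF hh0 hz0 (hz 0)
  have h3 : (⌊T / h⌋₊ : ℝ) * h ≤ T := by
    rw [← le_div_iff₀ hh0]; exact Nat.floor_le (by positivity)
  have h4 : (⌊T / h⌋₊ : ℝ) * h * σ₂ h ≤ T * (C₀ * h) :=
    mul_le_mul h3 (hC h ⟨hh0, hh1⟩) (by rw [← hσ₂.2.2]; exact hσ₂.1 hh0.le) hT.le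
  linarith

end
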